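/- arXiv:2404.18233 — 2 statements merged into one kernel-verified Lean document; each statement's English description precedes it below -/
import Mathlib

section
/- Under the asynchrony and boundary overlap conditions, the number of overlapping pairs, i.e., the number of pairs (i,j) with 1 ≤ i ≤ M₁, 1 ≤ j ≤ M₂ and Set.Ioc t¹_{i−1} t¹_i ∩ Set.Ioc t²_{j−1} t²_j ≠ ∅, equals (M₁+1) + (M₂+1) − 3 = M₁ + M₂ − 1, that is, three less than the total number of observation times in the two sequences. -/
/-!
The overlap of two intervals `(a, b]` and `(c, d]` is empty or starts at `max a c`, and this start
lies in both `[a, b)` and `[c, d)`. The cells `[t (i - 1), t i)` of a sequence `t` are disjoint and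
cover the range from its first to its last term, so an overlapping pair is determined by the start
of its overlap, and the starts are exactly the observation times, of either sequence, in the window
where both sequences are running. Under the boundary conditions these times are the start of the
window and all the times that are neither first nor last in their sequence. A time of this kind
common to both sequences is counted once, and so lowers the number of overlaps by one; asynchrony
excludes it.
-/

lemma image_inter_image_eq_empty {ι κ α : Type*} [DecidableEq α] {f : ι → α} {g : κ → α}
    {s : Finset ι} {u : Finset κ} (h : ∀ i ∈ s, ∀ j ∈ u, f i ≠ g j) :
    s.image f ∩ u.image g = ∅ := by
  rw [← Finset.disjoint_iff_inter_eq_empty, ← Finset.disjoint_coe, Finset.coe_image,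
    Finset.coe_image]
  exact Set.disjoint_image_image h

section Cells

variable {α : Type*} [LinearOrder α] {t : ℕ → α} {M : ℕ} {x c d : α}

lemma exists_mem_Ico_pred (hx : x ∈ Set.Ico (t 0) (t M)) :
    ∃ i ∈ Finset.Icc 1 M, x ∈ Set.Ico (t (i - 1)) (t i) := by
  have hex : ∃ i, x < t i := ⟨M, hx.2⟩
  have hpos : 0 < Nat.find hex := (Nat.find_pos hex).2 hx.1.not_gt
  exact ⟨Nat.find hex, Finset.mem_Icc.2 ⟨hpos, Nat.find_min' hex hx.2⟩,
    not_lt.1 (Nat.find_min hex (Nat.sub_lt hpos one_pos)), Nat.find_spec hex⟩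

lemma eq_of_mem_Ico_pred (ht : MonotoneOn t (Set.Iic M)) {i j : ℕ} (hi : i ∈ Finset.Icc 1 M)
    (hj : j ∈ Finset.Icc 1 M) (hxi : x ∈ Set.Ico (t (i - 1)) (t i))
    (hxj : x ∈ Set.Ico (t (j - 1)) (t j)) : i = j := by
  rw [Finset.mem_Icc] at hi hj
  have hij : i - 1 < j :=
    ht.reflect_lt (Set.mem_Iic.2 (by lia)) (Set.mem_Iic.2 hj.2) (hxi.1.trans_lt hxj.2)
  have hji : j - 1 < i :=
    ht.reflect_lt (Set.mem_Iic.2 (by lia)) (Set.mem_Iic.2 hi.2) (hxj.1.trans_lt hxi.2)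
  lia

lemma apply_eq_of_mem_Ico_pred (ht : MonotoneOn t (Set.Iic M)) {i k : ℕ} (hi : i ≤ M)
    (hk : k ≤ M) (h : t k ∈ Set.Ico (t (i - 1)) (t i)) : t k = t (i - 1) := by
  have hki : k < i := ht.reflect_lt hk hi h.2
  exact (ht hk (Set.mem_Iic.2 (by lia)) (Nat.le_sub_one_of_lt hki)).antisymm h.1

lemma Ico_pred_subset_Ico (ht : MonotoneOn t (Set.Iic M)) {i : ℕ} (hi : i ≤ M) :
    Set.Ico (t (i - 1)) (t i) ⊆ Set.Ico (t 0) (t M) :=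
  Set.Ico_subset_Ico (ht (Set.mem_Iic.2 (by lia)) (Set.mem_Iic.2 (by lia)) (Nat.zero_le _))
    (ht hi Set.self_mem_Iic hi)

lemma filter_mem_Ioo_image_Iic (ht : MonotoneOn t (Set.Iic M)) (h₀ : t 0 ≤ c) (h₁ : c < t 1)
    (hpred : t (M - 1) < d) (hM : d ≤ t M) :
    {x ∈ (Finset.Iic M).image t | x ∈ Set.Ioo c d} = (Finset.Ico 1 M).image t := by
  have hmem : ∀ k ≤ M, t k ∈ Set.Ioo c d ↔ k ∈ Finset.Ico 1 M := by
    intro k hk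
    rw [Finset.mem_Ico]
    constructor
    · rintro ⟨hck, hkd⟩
      exact ⟨ht.reflect_lt (Set.mem_Iic.2 M.zero_le) hk (h₀.trans_lt hck),
        ht.reflect_lt hk Set.self_mem_Iic (hkd.trans_le hM)⟩
    · rintro ⟨h1k, hkM⟩
      exact ⟨h₁.trans_le (ht (Set.mem_Iic.2 (by lia)) hk h1k),
        (ht hk (Set.mem_Iic.2 (by lia)) (Nat.le_sub_one_of_lt hkM)).trans_lt hpred⟩
  rw [Finset.filter_image]
  congr 1
  ext k
  simp only [Finset.mem_filter, Finset.mem_Iic]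
  refine ⟨fun h => (hmem k h.1).1 h.2, fun h => ?_⟩
  have hk : k ≤ M := (Finset.mem_Ico.1 h).2.le
  exact ⟨hk, (hmem k hk).2 h⟩

lemma card_image_Ico_one (ht : Set.InjOn t (Set.Iic M)) :
    ((Finset.Ico 1 M).image t).card = M - 1 := by
  rw [Finset.card_image_of_injOn (ht.mono fun i hi => (Finset.mem_Ico.1 hi).2.le), Nat.card_Ico]

end Cells

section Overlaps

variable {α : Type*} [LinearOrder α] {t₁ t₂ : ℕ → α} {M₁ M₂ : ℕ}

open Classical in
/-- The pairs `(i, j)` for which the `i`-th interval `(t₁ (i - 1), t₁ i]` and the `j`-th interval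
`(t₂ (j - 1), t₂ j]` intersect. Intervals are numbered from `1`, so `i - 1` is never truncated. -/
noncomputable def overlappingPairs (t₁ t₂ : ℕ → α) (M₁ M₂ : ℕ) : Finset (ℕ × ℕ) :=
  (Finset.Icc 1 M₁ ×ˢ Finset.Icc 1 M₂).filter
    (fun p : ℕ × ℕ =>
      (Set.Ioc (t₁ (p.1 - 1)) (t₁ p.1) ∩ Set.Ioc (t₂ (p.2 - 1)) (t₂ p.2)).Nonempty)

/-- The left endpoint of the intersection of the `p.1`-th interval of `t₁` and the `p.2`-th interval
of `t₂`, meaningful only if they overlap. It does not belong to the intersection. -/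
def overlapStart (t₁ t₂ : ℕ → α) (p : ℕ × ℕ) : α :=
  max (t₁ (p.1 - 1)) (t₂ (p.2 - 1))

/-- The distinct terms of the two sequences from the later first term (included) to the earlier last
term (excluded). -/
def sharedTimes (t₁ t₂ : ℕ → α) (M₁ M₂ : ℕ) : Finset α :=
  {x ∈ (Finset.Iic M₁).image t₁ ∪ (Finset.Iic M₂).image t₂ |
    x ∈ Set.Ico (max (t₁ 0) (t₂ 0)) (min (t₁ M₁) (t₂ M₂))}

lemma mem_overlappingPairs {p : ℕ × ℕ} :
    p ∈ overlappingPairs t₁ t₂ M₁ M₂ ↔ (p.1 ∈ Finset.Icc 1 M₁ ∧ p.2 ∈ Finset.Icc 1 M₂) ∧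
      overlapStart t₁ t₂ p ∈ Set.Ico (t₁ (p.1 - 1)) (t₁ p.1) ∧
      overlapStart t₁ t₂ p ∈ Set.Ico (t₂ (p.2 - 1)) (t₂ p.2) := by
  simp only [overlappingPairs, overlapStart, Finset.mem_filter, Finset.mem_product,
    Set.Ioc_inter_Ioc, Set.nonempty_Ioc, lt_min_iff, Set.mem_Ico, le_max_left, le_max_right,
    true_and]

lemma mapsTo_overlapStart (ht₁ : MonotoneOn t₁ (Set.Iic M₁)) (ht₂ : MonotoneOn t₂ (Set.Iic M₂)) :
    Set.MapsTo (overlapStart t₁ t₂) (overlappingPairs t₁ t₂ M₁ M₂) (sharedTimes t₁ t₂ M₁ M₂) := by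
  rintro ⟨i, j⟩ hp
  obtain ⟨⟨hi, hj⟩, h₁, h₂⟩ := mem_overlappingPairs.1 hp
  rw [Finset.mem_Icc] at hi hj
  have htime : overlapStart t₁ t₂ (i, j) ∈
      (Finset.Iic M₁).image t₁ ∪ (Finset.Iic M₂).image t₂ := by
    rcases max_choice (t₁ (i - 1)) (t₂ (j - 1)) with h | h <;> rw [overlapStart, h]
    · exact Finset.mem_union_left _ (Finset.mem_image_of_mem _ (Finset.mem_Iic.2 (by lia)))
    · exact Finset.mem_union_right _ (Finset.mem_image_of_mem _ (Finset.mem_Iic.2 (by lia)))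
  refine Finset.mem_filter.2 ⟨htime, ?_⟩
  rw [← Set.Ico_inter_Ico]
  exact ⟨Ico_pred_subset_Ico ht₁ hi.2 h₁, Ico_pred_subset_Ico ht₂ hj.2 h₂⟩

lemma injOn_overlapStart (ht₁ : MonotoneOn t₁ (Set.Iic M₁)) (ht₂ : MonotoneOn t₂ (Set.Iic M₂)) :
    Set.InjOn (overlapStart t₁ t₂) (overlappingPairs t₁ t₂ M₁ M₂) := by
  intro p hp q hq hpq
  obtain ⟨⟨hp₁, hp₂⟩, hcell₁, hcell₂⟩ := mem_overlappingPairs.1 hp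
  obtain ⟨⟨hq₁, hq₂⟩, hcell₁', hcell₂'⟩ := mem_overlappingPairs.1 hq
  rw [← hpq] at hcell₁' hcell₂'
  exact Prod.ext (eq_of_mem_Ico_pred ht₁ hp₁ hq₁ hcell₁ hcell₁')
    (eq_of_mem_Ico_pred ht₂ hp₂ hq₂ hcell₂ hcell₂')

lemma surjOn_overlapStart (ht₁ : MonotoneOn t₁ (Set.Iic M₁)) (ht₂ : MonotoneOn t₂ (Set.Iic M₂)) :
    Set.SurjOn (overlapStart t₁ t₂) (overlappingPairs t₁ t₂ M₁ M₂) (sharedTimes t₁ t₂ M₁ M₂) := by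
  intro x hx
  obtain ⟨htime, hwindow⟩ := Finset.mem_filter.1 (Finset.mem_coe.1 hx)
  rw [← Set.Ico_inter_Ico] at hwindow
  obtain ⟨i, hi, hxi⟩ := exists_mem_Ico_pred hwindow.1
  obtain ⟨j, hj, hxj⟩ := exists_mem_Ico_pred hwindow.2
  have hstart : overlapStart t₁ t₂ (i, j) = x := by
    simp only [Finset.mem_union, Finset.mem_image, Finset.mem_Iic] at htime
    rcases htime with ⟨k, hk, rfl⟩ | ⟨k, hk, rfl⟩
    · have hleft := apply_eq_of_mem_Ico_pred ht₁ (Finset.mem_Icc.1 hi).2 hk hxi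
      exact (max_eq_left (hxj.1.trans_eq hleft)).trans hleft.symm
    · have hleft := apply_eq_of_mem_Ico_pred ht₂ (Finset.mem_Icc.1 hj).2 hk hxj
      exact (max_eq_right (hxi.1.trans_eq hleft)).trans hleft.symm
  refine ⟨(i, j), mem_overlappingPairs.2 ⟨⟨hi, hj⟩, ?_⟩, hstart⟩
  rw [hstart]
  exact ⟨hxi, hxj⟩

theorem card_overlappingPairs_eq_card_sharedTimes (ht₁ : MonotoneOn t₁ (Set.Iic M₁))
    (ht₂ : MonotoneOn t₂ (Set.Iic M₂)) :
    (overlappingPairs t₁ t₂ M₁ M₂).card = (sharedTimes t₁ t₂ M₁ M₂).card :=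
  Finset.card_nbij (overlapStart t₁ t₂) (mapsTo_overlapStart ht₁ ht₂)
    (injOn_overlapStart ht₁ ht₂) (surjOn_overlapStart ht₁ ht₂)

lemma sharedTimes_eq_insert_filter_mem_Ioo
    (h : max (t₁ 0) (t₂ 0) < min (t₁ M₁) (t₂ M₂)) :
    sharedTimes t₁ t₂ M₁ M₂ = insert (max (t₁ 0) (t₂ 0))
      {x ∈ (Finset.Iic M₁).image t₁ ∪ (Finset.Iic M₂).image t₂ |
        x ∈ Set.Ioo (max (t₁ 0) (t₂ 0)) (min (t₁ M₁) (t₂ M₂))} := by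
  have hstart : max (t₁ 0) (t₂ 0) ∈ (Finset.Iic M₁).image t₁ ∪ (Finset.Iic M₂).image t₂ := by
    rcases max_choice (t₁ 0) (t₂ 0) with hmax | hmax <;> rw [hmax]
    · exact Finset.mem_union_left _ (Finset.mem_image_of_mem _ (Finset.mem_Iic.2 M₁.zero_le))
    · exact Finset.mem_union_right _ (Finset.mem_image_of_mem _ (Finset.mem_Iic.2 M₂.zero_le))
  ext x
  rw [sharedTimes, Finset.mem_filter, ← Set.Ioo_insert_left h, Set.mem_insert_iff,
    Finset.mem_insert, Finset.mem_filter, and_or_left,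
    and_iff_right_of_imp (fun hx : x = _ => hx ▸ hstart)]

lemma card_sharedTimes_eq_card_union_add_one (ht₁ : MonotoneOn t₁ (Set.Iic M₁))
    (ht₂ : MonotoneOn t₂ (Set.Iic M₂)) (hinit : max (t₁ 0) (t₂ 0) < min (t₁ 1) (t₂ 1))
    (hterm : max (t₁ (M₁ - 1)) (t₂ (M₂ - 1)) < min (t₁ M₁) (t₂ M₂)) :
    (sharedTimes t₁ t₂ M₁ M₂).card
      = ((Finset.Ico 1 M₁).image t₁ ∪ (Finset.Ico 1 M₂).image t₂).card + 1 := by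
  have hwindow : max (t₁ 0) (t₂ 0) < min (t₁ M₁) (t₂ M₂) :=
    (max_le_max (ht₁ (Set.mem_Iic.2 M₁.zero_le) (Set.mem_Iic.2 M₁.pred_le) (Nat.zero_le _))
      (ht₂ (Set.mem_Iic.2 M₂.zero_le) (Set.mem_Iic.2 M₂.pred_le) (Nat.zero_le _))).trans_lt hterm
  rw [sharedTimes_eq_insert_filter_mem_Ioo hwindow,
    Finset.card_insert_of_notMem (fun h => Set.left_notMem_Ioo (Finset.mem_filter.1 h).2),
    Finset.filter_union,
    filter_mem_Ioo_image_Iic ht₁ (le_max_left _ _) (lt_min_iff.1 hinit).1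
      (max_lt_iff.1 hterm).1 (min_le_left _ _),
    filter_mem_Ioo_image_Iic ht₂ (le_max_right _ _) (lt_min_iff.1 hinit).2
      (max_lt_iff.1 hterm).2 (min_le_right _ _)]

theorem overlaps_count_asynchronous_general
    (ht₁ : StrictMonoOn t₁ (Set.Iic M₁)) (ht₂ : StrictMonoOn t₂ (Set.Iic M₂))
    (hinit : max (t₁ 0) (t₂ 0) < min (t₁ 1) (t₂ 1))
    (hterm : max (t₁ (M₁ - 1)) (t₂ (M₂ - 1)) < min (t₁ M₁) (t₂ M₂)) :
    (overlappingPairs t₁ t₂ M₁ M₂).card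
        + ((Finset.Ico 1 M₁).image t₁ ∩ (Finset.Ico 1 M₂).image t₂).card
      = M₁ + M₂ - 1 := by
  have hM₁ : M₁ ≠ 0 := by
    rintro rfl
    exact (max_lt_iff.1 hterm).1.not_ge (min_le_left _ _)
  have hM₂ : M₂ ≠ 0 := by
    rintro rfl
    exact (max_lt_iff.1 hterm).2.not_ge (min_le_right _ _)
  have hunion := Finset.card_union_add_card_inter
    ((Finset.Ico 1 M₁).image t₁) ((Finset.Ico 1 M₂).image t₂)
  rw [card_image_Ico_one ht₁.injOn, card_image_Ico_one ht₂.injOn] at hunion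
  rw [card_overlappingPairs_eq_card_sharedTimes ht₁.monotoneOn ht₂.monotoneOn,
    card_sharedTimes_eq_card_union_add_one ht₁.monotoneOn ht₂.monotoneOn hinit hterm]
  lia

end Overlaps

open Classical in
/-- Under complete asynchrony and the boundary overlap conditions, the number of
overlapping pairs of observation intervals equals `M₁ + M₂ - 1`, i.e. three less
than the total number `(M₁+1) + (M₂+1)` of observation times. -/
theorem overlaps_count_asynchronous (M₁ M₂ : ℕ) (hM₁ : 1 ≤ M₁) (hM₂ : 1 ≤ M₂)
    (t₁ t₂ : ℕ → ℝ)
    (ht₁ : ∀ i < M₁, t₁ i < t₁ (i + 1)) (ht₂ : ∀ j < M₂, t₂ j < t₂ (j + 1))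
    (hasync : ∀ i ≤ M₁, ∀ j ≤ M₂, t₁ i ≠ t₂ j)
    (hinit : max (t₁ 0) (t₂ 0) < min (t₁ 1) (t₂ 1))
    (hterm : max (t₁ (M₁ - 1)) (t₂ (M₂ - 1)) < min (t₁ M₁) (t₂ M₂)) :
    ((Finset.Icc 1 M₁ ×ˢ Finset.Icc 1 M₂).filter
        (fun p : ℕ × ℕ =>
          (Set.Ioc (t₁ (p.1 - 1)) (t₁ p.1) ∩ Set.Ioc (t₂ (p.2 - 1)) (t₂ p.2)).Nonempty)).card
      = M₁ + M₂ - 1 := by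
  have hcommon : (Finset.Ico 1 M₁).image t₁ ∩ (Finset.Ico 1 M₂).image t₂ = ∅ :=
    image_inter_image_eq_empty fun i hi j hj =>
      hasync i (Finset.mem_Ico.1 hi).2.le j (Finset.mem_Ico.1 hj).2.le
  rw [← overlaps_count_asynchronous_general (strictMonoOn_Iic_of_lt_succ ht₁)
    (strictMonoOn_Iic_of_lt_succ ht₂) hinit hterm, hcommon, Finset.card_empty, add_zero,
    overlappingPairs]
end

section
/- Assume the sequences are completely asynchronous, i.e., t¹_i ≠ t²_j for all i, j, and satisfy the boundary overlap conditions max(t¹_0, t²_0) < min(t¹_1, t²_1) and max(t¹_{M₁−1}, t²_{M₂−1}) < min(t¹_{M₁}, t²_{M₂}). Then for every j with 1 < j < M₂ − 1, the point t²_j is nonextant if and only if no point of the first sequence lies in the open interval (t²_{j−1}, t²_{j+1}), i.e., t¹_k ∉ Set.Ioo t²_{j−1} t²_{j+1} for all 0 ≤ k ≤ M₁. Equivalently, in the merged sorted sequence of all observation times, t²_j is nonextant exactly when both its immediate predecessor and immediate successor belong to the second sequence. -/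
open Classical in
/-- Indicator `χ(i,j)` of the event that the observation intervals
`(t¹_{i-1}, t¹_i]` and `(t²_{j-1}, t²_j]` overlap. -/
noncomputable def chi (t₁ t₂ : ℕ → ℝ) (i j : ℕ) : ℝ :=
  if (Set.Ioc (t₁ (i - 1)) (t₁ i) ∩ Set.Ioc (t₂ (j - 1)) (t₂ j)).Nonempty then 1 else 0

/-- The Hayashi–Yoshida double sum for price functions `P₁, P₂` and observation
times `t₁ 0 < ⋯ < t₁ M₁` and `t₂ 0 < ⋯ < t₂ M₂`. -/
noncomputable def HY (M₁ M₂ : ℕ) (t₁ t₂ : ℕ → ℝ) (P₁ P₂ : ℝ → ℝ) : ℝ :=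
  ∑ i ∈ Finset.Icc 1 M₁, ∑ j ∈ Finset.Icc 1 M₂,
    (P₁ (t₁ i) - P₁ (t₁ (i - 1))) * (P₂ (t₂ j) - P₂ (t₂ (j - 1))) * chi t₁ t₂ i j

/-- The observation time `t₂ j` is *nonextant* if the Hayashi–Yoshida sum does not
depend on the value of the second price function at `t₂ j`. -/
def Nonextant (M₁ M₂ : ℕ) (t₁ t₂ : ℕ → ℝ) (j : ℕ) : Prop :=
  ∀ P₁ P₂ P₂' : ℝ → ℝ, (∀ x : ℝ, x ≠ t₂ j → P₂' x = P₂ x) →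
    HY M₁ M₂ t₁ t₂ P₁ P₂ = HY M₁ M₂ t₁ t₂ P₁ P₂'

/-!
Perturbing `P₂` by `δ` at `t₂ j` changes the Hayashi–Yoshida sum by
`δ * ∑ i, ΔP₁ i * (χ(i,j) - χ(i,j+1))`. The increments `ΔP₁ i` are arbitrary, so `t₂ j` is
nonextant iff every interval `(a, b]` of the first sequence meets both or neither of the two
adjacent intervals `(x, y]` and `(y, z]`, where `y = t₂ j`. Exactly one of them is met iff
`b ∈ (x, y]` or `a ∈ [y, z)`. These two ranges cover `(x, z)`, and when the first sequence starts
no later than `x` and ends no earlier than `z`, each of its points in `(x, z)` is both a left and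
a right endpoint.
-/

open Set in
lemma nonempty_Ioc_inter_left_iff_right {α : Type*} [LinearOrder α] {a b x y z : α}
    (hab : a < b) (hxy : x < y) (hyz : y < z) :
    ((Ioc a b ∩ Ioc x y).Nonempty ↔ (Ioc a b ∩ Ioc y z).Nonempty) ↔
      b ∉ Ioc x y ∧ a ∉ Ico y z := by
  have meets_left : (Ioc a b ∩ Ioc x y).Nonempty ↔ a < y ∧ x < b := by
    simp [Ioc_inter_Ioc, hab, hxy, and_comm]
  have meets_right : (Ioc a b ∩ Ioc y z).Nonempty ↔ a < z ∧ y < b := by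
    simp [Ioc_inter_Ioc, hab, hyz, and_comm]
  rw [meets_left, meets_right, mem_Ioc, mem_Ico]
  grind

lemma apply_sub_one_lt_of_strictMonoOn {α : Type*} [Preorder α] {t : ℕ → α} {M i : ℕ}
    (ht : StrictMonoOn t (Set.Iic M)) (hi : 0 < i) (hiM : i ≤ M) : t (i - 1) < t i :=
  ht ((i.sub_le 1).trans hiM) hiM (Nat.sub_one_lt_of_lt hi)

lemma forall_sum_increments_mul_eq_zero_iff {α R : Type*} [NonAssocRing R] {t : ℕ → α} {M : ℕ}
    (ht : Set.InjOn t (Set.Iic M)) (c : ℕ → R) :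
    (∀ P : α → R, ∑ i ∈ Finset.Icc 1 M, (P (t i) - P (t (i - 1))) * c i = 0) ↔
      ∀ i ∈ Finset.Icc 1 M, c i = 0 := by
  classical
  refine ⟨fun h i hi => ?_, fun h P => Finset.sum_eq_zero fun i hi => by rw [h i hi, mul_zero]⟩
  -- The indicator of the observations from the `i`-th on has the `i`-th increment as its only jump.
  let P : α → R := (t '' Set.Icc i M).indicator 1
  have P_apply : ∀ l ≤ M, P (t l) = if i ≤ l then 1 else 0 := fun l hl => by
    simp [P, Set.indicator_apply, ht.mem_image_iff (Set.Icc_subset_Iic_self (a := i)) hl, hl]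
  have increment : ∀ l ∈ Finset.Icc 1 M,
      (P (t l) - P (t (l - 1))) * c l = if i = l then c l else 0 := fun l hl => by
    obtain ⟨hl₁, hlM⟩ := Finset.mem_Icc.1 hl
    rw [P_apply l hlM, P_apply (l - 1) (by omega)]
    rcases lt_trichotomy i l with hil | rfl | hli
    · simp [hil.le, hil.ne, Nat.le_sub_one_of_lt hil]
    · simp [show ¬ i ≤ i - 1 by omega]
    · simp [hli.ne', hli.not_ge, show ¬ i ≤ l - 1 by omega]
  simpa [Finset.sum_congr rfl increment, hi] using h P

section HayashiYoshida

variable {M₁ M₂ : ℕ} {t₁ t₂ : ℕ → ℝ} {j : ℕ}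

lemma chi_eq_chi_iff {i i' j' : ℕ} :
    chi t₁ t₂ i j = chi t₁ t₂ i' j' ↔
      ((Set.Ioc (t₁ (i - 1)) (t₁ i) ∩ Set.Ioc (t₂ (j - 1)) (t₂ j)).Nonempty ↔
        (Set.Ioc (t₁ (i' - 1)) (t₁ i') ∩ Set.Ioc (t₂ (j' - 1)) (t₂ j')).Nonempty) := by
  unfold chi
  split_ifs <;> simp [*]

lemma HY_sub_right (P₁ P₂ P₂' : ℝ → ℝ) :
    HY M₁ M₂ t₁ t₂ P₁ (P₂ - P₂') = HY M₁ M₂ t₁ t₂ P₁ P₂ - HY M₁ M₂ t₁ t₂ P₁ P₂' := by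
  simp only [HY, Pi.sub_apply, ← Finset.sum_sub_distrib, ← sub_mul, ← mul_sub, sub_sub_sub_comm]

lemma HY_eq_mul_sum_of_eq_zero (hj₀ : 0 < j) (hjM : j < M₂) (P : ℝ → ℝ) {Q : ℝ → ℝ}
    (hQ : ∀ l ≤ M₂, l ≠ j → Q (t₂ l) = 0) :
    HY M₁ M₂ t₁ t₂ P Q = Q (t₂ j) * ∑ i ∈ Finset.Icc 1 M₁,
      (P (t₁ i) - P (t₁ (i - 1))) * (chi t₁ t₂ i j - chi t₁ t₂ i (j + 1)) := by
  rw [HY, Finset.mul_sum]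
  refine Finset.sum_congr rfl fun i _ => ?_
  rw [Finset.sum_eq_add_of_mem j (j + 1) (Finset.mem_Icc.2 ⟨hj₀, hjM.le⟩)
    (Finset.mem_Icc.2 ⟨by omega, hjM⟩) (by omega)]
  · rw [hQ (j - 1) (by omega) (by omega), hQ (j + 1) hjM (by omega), Nat.add_sub_cancel]
    ring
  · rintro l hl ⟨hlj, hlj'⟩
    obtain ⟨hl₁, hlM⟩ := Finset.mem_Icc.1 hl
    rw [hQ l hlM hlj, hQ (l - 1) (by omega) (by omega), sub_self, mul_zero, zero_mul]

lemma HY_sub_HY_eq_mul_sum (hj₀ : 0 < j) (hjM : j < M₂) (P₁ : ℝ → ℝ) {P₂ P₂' : ℝ → ℝ}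
    (hP : ∀ l ≤ M₂, l ≠ j → P₂' (t₂ l) = P₂ (t₂ l)) :
    HY M₁ M₂ t₁ t₂ P₁ P₂ - HY M₁ M₂ t₁ t₂ P₁ P₂' =
      (P₂ (t₂ j) - P₂' (t₂ j)) * ∑ i ∈ Finset.Icc 1 M₁,
        (P₁ (t₁ i) - P₁ (t₁ (i - 1))) * (chi t₁ t₂ i j - chi t₁ t₂ i (j + 1)) := by
  rw [← HY_sub_right]
  exact HY_eq_mul_sum_of_eq_zero hj₀ hjM P₁ fun l hl hlj => sub_eq_zero.2 (hP l hl hlj).symm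

lemma nonextant_iff_forall_sum_eq_zero (ht₂ : Set.InjOn t₂ (Set.Iic M₂))
    (hj₀ : 0 < j) (hjM : j < M₂) :
    Nonextant M₁ M₂ t₁ t₂ j ↔ ∀ P : ℝ → ℝ, ∑ i ∈ Finset.Icc 1 M₁,
      (P (t₁ i) - P (t₁ (i - 1))) * (chi t₁ t₂ i j - chi t₁ t₂ i (j + 1)) = 0 := by
  constructor
  · intro h P
    have hP : ∀ x, x ≠ t₂ j → (0 : ℝ → ℝ) x = (Pi.single (t₂ j) 1 : ℝ → ℝ) x :=
      fun x hx => by simp [hx]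
    have hdiff := HY_sub_HY_eq_mul_sum (M₁ := M₁) (t₁ := t₁) hj₀ hjM P
      fun l hl hlj => hP _ (ht₂.ne hl hjM.le hlj)
    simpa [h P _ _ hP] using hdiff.symm
  · intro h P P₂ P₂' hP
    rw [← sub_eq_zero, HY_sub_HY_eq_mul_sum hj₀ hjM P
      fun l hl hlj => hP _ (ht₂.ne hl hjM.le hlj), h, mul_zero]

lemma nonextant_iff_forall_chi_eq (ht₁ : Set.InjOn t₁ (Set.Iic M₁))
    (ht₂ : Set.InjOn t₂ (Set.Iic M₂)) (hj₀ : 0 < j) (hjM : j < M₂) :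
    Nonextant M₁ M₂ t₁ t₂ j ↔
      ∀ i ∈ Finset.Icc 1 M₁, chi t₁ t₂ i j = chi t₁ t₂ i (j + 1) := by
  simp only [nonextant_iff_forall_sum_eq_zero ht₂ hj₀ hjM,
    forall_sum_increments_mul_eq_zero_iff ht₁, sub_eq_zero]

lemma nonextant_iff_forall_notMem_Ioc_and_notMem_Ico (ht₁ : StrictMonoOn t₁ (Set.Iic M₁))
    (ht₂ : StrictMonoOn t₂ (Set.Iic M₂)) (hj₀ : 0 < j) (hjM : j < M₂) :
    Nonextant M₁ M₂ t₁ t₂ j ↔ ∀ i ∈ Finset.Icc 1 M₁,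
      t₁ i ∉ Set.Ioc (t₂ (j - 1)) (t₂ j) ∧ t₁ (i - 1) ∉ Set.Ico (t₂ j) (t₂ (j + 1)) := by
  rw [nonextant_iff_forall_chi_eq ht₁.injOn ht₂.injOn hj₀ hjM]
  refine forall₂_congr fun i hi => ?_
  obtain ⟨hi₁, hiM⟩ := Finset.mem_Icc.1 hi
  have hstep : t₁ (i - 1) < t₁ i := apply_sub_one_lt_of_strictMonoOn ht₁ hi₁ hiM
  have hleft : t₂ (j - 1) < t₂ j := apply_sub_one_lt_of_strictMonoOn ht₂ hj₀ hjM.le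
  have hright : t₂ j < t₂ (j + 1) := ht₂ hjM.le hjM j.lt_succ_self
  rw [chi_eq_chi_iff, Nat.add_sub_cancel, nonempty_Ioc_inter_left_iff_right hstep hleft hright]

theorem nonextant_iff_no_first_sequence_point_between_general
    (ht₁ : StrictMonoOn t₁ (Set.Iic M₁)) (ht₂ : StrictMonoOn t₂ (Set.Iic M₂))
    (hj₀ : 0 < j) (hjM : j < M₂) (hstart : t₁ 0 ≤ t₂ (j - 1)) (hend : t₂ (j + 1) ≤ t₁ M₁) :
    Nonextant M₁ M₂ t₁ t₂ j ↔ ∀ k ≤ M₁, t₁ k ∉ Set.Ioo (t₂ (j - 1)) (t₂ (j + 1)) := by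
  have hleft : t₂ (j - 1) < t₂ j := apply_sub_one_lt_of_strictMonoOn ht₂ hj₀ hjM.le
  have hright : t₂ j < t₂ (j + 1) := ht₂ hjM.le hjM j.lt_succ_self
  rw [nonextant_iff_forall_notMem_Ioc_and_notMem_Ico ht₁ ht₂ hj₀ hjM]
  constructor
  · rintro h k hk ⟨hk_left, hk_right⟩
    rcases le_or_gt (t₁ k) (t₂ j) with hkj | hjk
    · have hk₀ : k ≠ 0 := fun hk₀ => (hk₀ ▸ hk_left).not_ge hstart
      exact (h k (Finset.mem_Icc.2 ⟨by omega, hk⟩)).1 ⟨hk_left, hkj⟩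
    · have hkM : k ≠ M₁ := fun hkM => (hkM ▸ hk_right).not_ge hend
      exact (h (k + 1) (Finset.mem_Icc.2 ⟨by omega, by omega⟩)).2 ⟨hjk.le, hk_right⟩
  · intro h i hi
    have hiM : i ≤ M₁ := (Finset.mem_Icc.1 hi).2
    exact ⟨fun hmem => h i hiM ⟨hmem.1, hmem.2.trans_lt hright⟩,
      fun hmem => h (i - 1) ((i.sub_le 1).trans hiM) ⟨hleft.trans_le hmem.1, hmem.2⟩⟩

end HayashiYoshida

/-- Under complete asynchrony and the boundary overlap conditions, for
`1 < j < M₂ - 1` the point `t₂ j` is nonextant iff no observation time of the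
first sequence lies in the open interval `(t₂ (j-1), t₂ (j+1))`, i.e. iff in the
merged sorted sequence both neighbours of `t₂ j` belong to the second sequence. -/
theorem nonextant_iff_no_first_sequence_point_between
    (M₁ M₂ : ℕ) (hM₁ : 1 ≤ M₁) (hM₂ : 1 ≤ M₂) (t₁ t₂ : ℕ → ℝ)
    (ht₁ : ∀ i < M₁, t₁ i < t₁ (i + 1)) (ht₂ : ∀ j < M₂, t₂ j < t₂ (j + 1))
    (hasync : ∀ i ≤ M₁, ∀ j ≤ M₂, t₁ i ≠ t₂ j)
    (hinit : max (t₁ 0) (t₂ 0) < min (t₁ 1) (t₂ 1))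
    (hterm : max (t₁ (M₁ - 1)) (t₂ (M₂ - 1)) < min (t₁ M₁) (t₂ M₂))
    (j : ℕ) (hj1 : 1 < j) (hj2 : j < M₂ - 1) :
    Nonextant M₁ M₂ t₁ t₂ j ↔
      ∀ k ≤ M₁, t₁ k ∉ Set.Ioo (t₂ (j - 1)) (t₂ (j + 1)) := by
  have mono₁ : StrictMonoOn t₁ (Set.Iic M₁) := strictMonoOn_Iic_of_lt_succ ht₁
  have mono₂ : StrictMonoOn t₂ (Set.Iic M₂) := strictMonoOn_Iic_of_lt_succ ht₂
  have hstart : t₁ 0 < t₂ 1 := (max_lt_iff.1 (lt_min_iff.1 hinit).2).1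
  have hend : t₂ (M₂ - 1) < t₁ M₁ := (max_lt_iff.1 (lt_min_iff.1 hterm).1).2
  have hleft : t₂ 1 ≤ t₂ (j - 1) := mono₂.monotoneOn (by grind) (by grind) (by omega)
  have hright : t₂ (j + 1) ≤ t₂ (M₂ - 1) := mono₂.monotoneOn (by grind) (by grind) (by omega)
  exact nonextant_iff_no_first_sequence_point_between_general mono₁ mono₂ (by omega) (by omega)
    (hstart.le.trans hleft) (hright.trans hend.le)
end
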